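/- (Correctness of branching rule B2.) Let G=(V,A) be a finite loopless digraph, r ∈ V, T an out-tree of G rooted at r, and v₀ ∈ V(T) a vertex with out-degree 0 in T and out-degree 1 in G. Let v₀, v₁, …, v_k (k ≥ 1) be pairwise distinct vertices such that: N⁺(v₀) = {v₁}; for each i with 1 ≤ i ≤ k−1, N⁺(v_i) \ {v₀,…,v_{i−1}} = {v_{i+1}}; and v₁,…,v_k ∉ V(T). Assume moreover that for every i with 1 ≤ i ≤ k there exist an index z with 1 ≤ z ≤ i and a vertex q ∉ {v₀,…,v_k} with (q,v_z) ∈ A. Then for every spanning out-tree T' of G rooted at r with T' ⪰ T there exists a spanning out-tree T'' of G rooted at r with T'' ⪰ T such that |leaves(T'')| ≥ |leaves(T')| and either v₀ is a leaf of T'', or all of v₀, v₁, …, v_k are internal vertices of T''. -/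

import Mathlib

variable {V : Type*} [DecidableEq V] [Fintype V]

/-- The vertex set of an arc set `T` together with the root `r`. -/
def dverts (r : V) (T : Finset (V × V)) : Finset V :=
  insert r (T.image Prod.fst ∪ T.image Prod.snd)

/-- In-degree of `v` in the arc set `T`. -/
def dInDeg (T : Finset (V × V)) (v : V) : ℕ :=
  (T.filter fun a => a.2 = v).card

/-- Out-degree of `v` in the arc set `T`. -/
def dOutDeg (T : Finset (V × V)) (v : V) : ℕ :=
  (T.filter fun a => a.1 = v).card

/-- Reachability by a directed path using only arcs of `T`. -/
def DReach (T : Finset (V × V)) (x y : V) : Prop :=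
  Relation.ReflTransGen (fun a b => (a, b) ∈ T) x y

/-- A loopless arc set. -/
def DLoopless (A : Finset (V × V)) : Prop := ∀ a ∈ A, a.1 ≠ a.2

/-- `T` is an out-tree of the digraph with arc set `A`, rooted at `r`. -/
def IsOutTree (A : Finset (V × V)) (r : V) (T : Finset (V × V)) : Prop :=
  T ⊆ A ∧ dInDeg T r = 0 ∧ (∀ v ∈ dverts r T, v ≠ r → dInDeg T v = 1) ∧
    ∀ v ∈ dverts r T, DReach T r v

/-- `T` is a spanning out-tree of the digraph with arc set `A`, rooted at `r`. -/
def IsSpanningOutTree (A : Finset (V × V)) (r : V) (T : Finset (V × V)) : Prop :=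
  IsOutTree A r T ∧ dverts r T = Finset.univ

/-- The leaves of an out-tree: vertices of out-degree 0. -/
def dleaves (r : V) (T : Finset (V × V)) : Finset V :=
  (dverts r T).filter fun v => dOutDeg T v = 0


theorem aux_out0 (T : Finset (V × V)) (x : V) : dOutDeg T x = 0 ↔ ∀ y, (x, y) ∉ T := by
  unfold dOutDeg
  rw [Finset.card_eq_zero, Finset.filter_eq_empty_iff]
  constructor
  · intro h y hy
    exact h hy rfl
  · rintro h ⟨a, b⟩ hab rfl
    exact h b hab

theorem aux_in0 (T : Finset (V × V)) (x : V) : dInDeg T x = 0 ↔ ∀ y, (y, x) ∉ T := by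
  unfold dInDeg
  rw [Finset.card_eq_zero, Finset.filter_eq_empty_iff]
  constructor
  · intro h y hy
    exact h hy rfl
  · rintro h ⟨a, b⟩ hab rfl
    exact h a hab

theorem aux_in1 (T : Finset (V × V)) (x : V) :
    dInDeg T x = 1 ↔ ∃ u, (u, x) ∈ T ∧ ∀ u', (u', x) ∈ T → u' = u := by
  unfold dInDeg
  rw [Finset.card_eq_one]
  constructor
  · rintro ⟨⟨a, b⟩, h⟩
    have h1 : ((a, b) : V × V) ∈ T.filter (fun a => a.2 = x) := by rw [h]; simp
    rw [Finset.mem_filter] at h1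
    obtain ⟨h2, h3⟩ := h1
    simp only at h3
    subst h3
    refine ⟨a, h2, fun u' hu' => ?_⟩
    have h4 : ((u', b) : V × V) ∈ T.filter (fun a => a.2 = b) := by simp [hu']
    rw [h] at h4
    simpa using h4
  · rintro ⟨u, hu, hu2⟩
    refine ⟨(u, x), ?_⟩
    ext ⟨a, b⟩
    simp only [Finset.mem_filter, Finset.mem_singleton, Prod.mk.injEq]
    constructor
    · rintro ⟨h1, rfl⟩
      exact ⟨hu2 _ h1, rfl⟩
    · rintro ⟨rfl, rfl⟩
      exact ⟨hu, rfl⟩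

theorem aux_span (A T : Finset (V × V)) (r : V) :
    IsSpanningOutTree A r T ↔ T ⊆ A ∧ (∀ u, (u, r) ∉ T) ∧
      (∀ x, x ≠ r → ∃ u, (u, x) ∈ T ∧ ∀ u', (u', x) ∈ T → u' = u) ∧ ∀ x, DReach T r x := by
  unfold IsSpanningOutTree IsOutTree
  constructor
  · rintro ⟨⟨h1, h2, h3, h4⟩, h5⟩
    refine ⟨h1, (aux_in0 _ _).1 h2, fun x hx => (aux_in1 _ _).1 (h3 x (by simp [h5]) hx),
      fun x => h4 x (by simp [h5])⟩
  · rintro ⟨h1, h2, h3, h4⟩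
    refine ⟨⟨h1, (aux_in0 _ _).2 h2, fun x _ hx => (aux_in1 _ _).2 (h3 x hx),
      fun x _ => h4 x⟩, ?_⟩
    rw [Finset.eq_univ_iff_forall]
    intro x
    by_cases hx : x = r
    · subst hx; simp [dverts]
    · obtain ⟨u, hu, -⟩ := h3 x hx
      unfold dverts
      exact Finset.mem_insert_of_mem (Finset.mem_union_right _ (Finset.mem_image.2 ⟨_, hu, rfl⟩))

theorem aux_leaf {A T : Finset (V × V)} {r : V} (h : IsSpanningOutTree A r T) (x : V) :
    x ∈ dleaves r T ↔ ∀ y, (x, y) ∉ T := by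
  unfold dleaves
  rw [Finset.mem_filter, h.2, aux_out0]
  simp

theorem aux_fst {T : Finset (V × V)} {r a b : V} (h : (a, b) ∈ T) : a ∈ dverts r T :=
  Finset.mem_insert_of_mem (Finset.mem_union_left _ (Finset.mem_image.2 ⟨_, h, rfl⟩))

theorem aux_snd {T : Finset (V × V)} {r a b : V} (h : (a, b) ∈ T) : b ∈ dverts r T :=
  Finset.mem_insert_of_mem (Finset.mem_union_right _ (Finset.mem_image.2 ⟨_, h, rfl⟩))

theorem stmt14 (A T : Finset (V × V)) (r : V) (k : ℕ) (v : ℕ → V)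
    (hA : DLoopless A) (hT : IsOutTree A r T) (hk : 1 ≤ k)
    (hinj : ∀ i j, i ≤ k → j ≤ k → v i = v j → i = j)
    (hv0T : v 0 ∈ dverts r T) (hv0deg : dOutDeg T (v 0) = 0)
    (hv0G : dOutDeg A (v 0) = 1)
    (hN0 : ∀ y : V, (v 0, y) ∈ A ↔ y = v 1)
    (hNi : ∀ i, 1 ≤ i → i ≤ k - 1 →
      ∀ y : V, ((v i, y) ∈ A ∧ ∀ j < i, y ≠ v j) ↔ y = v (i + 1))
    (hfree : ∀ i, 1 ≤ i → i ≤ k → v i ∉ dverts r T)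
    (hq : ∀ i, 1 ≤ i → i ≤ k → ∃ z, 1 ≤ z ∧ z ≤ i ∧
      ∃ q : V, (∀ j ≤ k, q ≠ v j) ∧ (q, v z) ∈ A) :
    ∀ T' : Finset (V × V), IsSpanningOutTree A r T' → T ⊆ T' →
      ∃ T'' : Finset (V × V), IsSpanningOutTree A r T'' ∧ T ⊆ T'' ∧
        (dleaves r T').card ≤ (dleaves r T'').card ∧
        (v 0 ∈ dleaves r T'' ∨ ∀ i ≤ k, 1 ≤ dOutDeg T'' (v i)) := by
  have key : ∀ n, n ≤ k → ∀ T' : Finset (V × V), IsSpanningOutTree A r T' → T ⊆ T' →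
      v n ∈ dleaves r T' →
      ∃ T'' : Finset (V × V), IsSpanningOutTree A r T'' ∧ T ⊆ T'' ∧
        (dleaves r T').card ≤ (dleaves r T'').card ∧ v 0 ∈ dleaves r T'' := by
    intro n
    induction n using Nat.strong_induction_on with
    | _ n ih =>
    intro hn T' hS hTT hleaf
    by_cases hsm : ∃ j < n, v j ∈ dleaves r T'
    · obtain ⟨j, hj, hjl⟩ := hsm
      exact ih j hj (by omega) T' hS hTT hjl
    push Not at hsm
    rcases Nat.eq_zero_or_pos n with h0 | hpos
    · subst h0
      exact ⟨T', hS, hTT, le_rfl, hleaf⟩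
    obtain ⟨hTA, hroot, hpar, hreach⟩ := (aux_span A T' r).1 hS
    have huniq : ∀ a b x, (a, x) ∈ T' → (b, x) ∈ T' → a = b := by
      intro a b x ha hb
      have hx : x ≠ r := by rintro rfl; exact hroot _ ha
      obtain ⟨u, _, hu⟩ := hpar x hx
      rw [hu a ha, hu b hb]
    have hleaf' := (aux_leaf hS _).1 hleaf
    -- path structure
    have hpath : ∀ j < n, (v j, v (j + 1)) ∈ T' ∧ ∀ y, (v j, y) ∈ T' → y = v (j + 1) := by
      intro j
      induction j using Nat.strong_induction_on with
      | _ j ihj =>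
      intro hj
      have honly : ∀ y, (v j, y) ∈ T' → y = v (j + 1) := by
        intro y hy
        rcases Nat.eq_zero_or_pos j with h0 | hjp
        · subst h0
          exact (hN0 y).1 (hTA hy)
        refine (hNi j hjp (by omega) y).1 ⟨hTA hy, ?_⟩
        rintro m hm rfl
        rcases Nat.eq_zero_or_pos m with h0 | hmp
        · subst h0
          have hr : v 0 ≠ r := by
            intro h
            rw [h] at hy
            exact hroot _ hy
          obtain ⟨u, hu, -⟩ := (aux_in1 _ _).1 (hT.2.2.1 _ hv0T hr)
          have := huniq _ _ _ hy (hTT hu)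
          apply hfree j hjp (by omega)
          rw [this]
          exact aux_fst hu
        · have h1 := (ihj (m - 1) (by omega) (by omega)).1
          rw [Nat.sub_add_cancel hmp] at h1
          have h2 := hinj _ _ (by omega) (by omega) (huniq _ _ _ hy h1)
          omega
      refine ⟨?_, honly⟩
      have h1 := hsm j hj
      rw [aux_leaf hS] at h1
      push Not at h1
      obtain ⟨y, hy⟩ := h1
      have h2 := honly y hy
      rwa [h2] at hy
    obtain ⟨z, hz1, hzn, q, hqv, hqA⟩ := hq n hpos hn
    obtain ⟨p, rfl⟩ : ∃ p, z = p + 1 := ⟨z - 1, by omega⟩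
    obtain ⟨hpT, hponly⟩ := hpath p (by omega)
    have hzr : v (p + 1) ≠ r := by
      intro h
      rw [h] at hpT
      exact hroot _ hpT
    set S : Finset (V × V) := insert (q, v (p + 1)) (T'.erase (v p, v (p + 1))) with hSdef
    have hmem : ∀ a b, (a, b) ∈ S ↔
        (a = q ∧ b = v (p + 1)) ∨ ((a, b) ∈ T' ∧ b ≠ v (p + 1)) := by
      intro a b
      simp only [hSdef, Finset.mem_insert, Finset.mem_erase, Prod.mk.injEq, ne_eq]
      constructor
      · rintro (h | ⟨h1, h2⟩)
        · exact Or.inl h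
        · refine Or.inr ⟨h2, ?_⟩
          rintro rfl
          exact h1 ⟨huniq _ _ _ h2 hpT, rfl⟩
      · rintro (h | ⟨h1, h2⟩)
        · exact Or.inl h
        · exact Or.inr ⟨fun h => h2 h.2, h1⟩
    have hreach1 : ∀ x, DReach S r x ∨ ∃ m, p + 1 ≤ m ∧ m ≤ n ∧ x = v m := by
      intro x
      have hx := hreach x
      unfold DReach at hx
      induction hx with
      | refl => exact Or.inl Relation.ReflTransGen.refl
      | @tail a b _ hab ihx =>
        by_cases hb : b = v (p + 1)
        · exact Or.inr ⟨p + 1, le_rfl, hzn, hb⟩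
        rcases ihx with h | ⟨m, hm1, hm2, rfl⟩
        · exact Or.inl (Relation.ReflTransGen.tail h ((hmem _ _).2 (Or.inr ⟨hab, hb⟩)))
        · rcases Nat.lt_or_ge m n with h | h
          · exact Or.inr ⟨m + 1, by omega, by omega, (hpath m h).2 _ hab⟩
          · have : m = n := by omega
            subst this
            exact absurd hab (hleaf' _)
    have hrq : DReach S r q := by
      rcases hreach1 q with h | ⟨m, _, hm, hqm⟩
      · exact h
      · exact absurd hqm (hqv m (by omega))
    have hrm : ∀ d, p + 1 + d ≤ n → DReach S r (v (p + 1 + d)) := by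
      intro d
      induction d with
      | zero =>
        intro _
        exact Relation.ReflTransGen.tail hrq ((hmem _ _).2 (Or.inl ⟨rfl, rfl⟩))
      | succ d ihd =>
        intro hd
        refine Relation.ReflTransGen.tail (ihd (by omega)) ((hmem _ _).2 (Or.inr ⟨?_, ?_⟩))
        · exact (hpath (p + 1 + d) (by omega)).1
        · intro h
          have := hinj _ _ (by omega) (by omega) h
          omega
    have hSS : IsSpanningOutTree A r S := by
      rw [aux_span]
      refine ⟨?_, ?_, ?_, ?_⟩
      · rintro ⟨a, b⟩ hab
        rcases (hmem a b).1 hab with ⟨rfl, rfl⟩ | ⟨h, _⟩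
        · exact hqA
        · exact hTA h
      · intro u hu
        rcases (hmem _ _).1 hu with ⟨_, h⟩ | ⟨h, _⟩
        · exact hzr h.symm
        · exact hroot _ h
      · intro x hx
        by_cases hxz : x = v (p + 1)
        · refine ⟨q, (hmem _ _).2 (Or.inl ⟨rfl, hxz⟩), fun u' hu' => ?_⟩
          rcases (hmem _ _).1 hu' with ⟨h, _⟩ | ⟨_, h⟩
          · exact h
          · exact absurd hxz h
        · obtain ⟨u, hu, hu2⟩ := hpar x hx
          refine ⟨u, (hmem _ _).2 (Or.inr ⟨hu, hxz⟩), fun u' hu' => ?_⟩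
          rcases (hmem _ _).1 hu' with ⟨_, h⟩ | ⟨h, _⟩
          · exact absurd h hxz
          · exact hu2 _ h
      · intro x
        rcases hreach1 x with h | ⟨m, hm1, hm2, rfl⟩
        · exact h
        · have := hrm (m - (p + 1)) (by omega)
          rwa [Nat.add_sub_cancel' hm1] at this
    have hTS : T ⊆ S := by
      rintro ⟨a, b⟩ hab
      refine (hmem _ _).2 (Or.inr ⟨hTT hab, ?_⟩)
      rintro rfl
      exact hfree (p + 1) hz1 (by omega) (aux_snd hab)
    have hpl : v p ∈ dleaves r S := by
      rw [aux_leaf hSS]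
      intro y hy
      rcases (hmem _ _).1 hy with ⟨h, _⟩ | ⟨h1, h2⟩
      · exact hqv p (by omega) h.symm
      · exact h2 (hponly y h1)
    have hcard : (dleaves r T').card ≤ (dleaves r S).card := by
      have hsub : insert (v p) ((dleaves r T').erase q) ⊆ dleaves r S := by
        intro x hx
        rcases Finset.mem_insert.1 hx with rfl | hx
        · exact hpl
        · obtain ⟨hxq, hx⟩ := Finset.mem_erase.1 hx
          rw [aux_leaf hS] at hx
          rw [aux_leaf hSS]
          intro y hy
          rcases (hmem _ _).1 hy with ⟨h, _⟩ | ⟨h1, _⟩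
          · exact hxq h
          · exact hx y h1
      have h1 := Finset.card_le_card hsub
      rw [Finset.card_insert_of_notMem
        (fun h => hsm p (by omega) (Finset.mem_of_mem_erase h))] at h1
      have h2 := Finset.pred_card_le_card_erase (s := dleaves r T') (a := q)
      omega
    obtain ⟨T'', h1, h2, h3, h4⟩ := ih p (by omega) (by omega) S hSS hTS hpl
    exact ⟨T'', h1, h2, hcard.trans h3, h4⟩
  intro T' hS hTT
  by_cases h : ∀ i ≤ k, 1 ≤ dOutDeg T' (v i)
  · exact ⟨T', hS, hTT, le_rfl, Or.inr h⟩
  · push Not at h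
    obtain ⟨i, hi, hlt⟩ := h
    obtain ⟨T'', h1, h2, h3, h4⟩ := key i hi T' hS hTT
      ((aux_leaf hS _).2 ((aux_out0 _ _).1 (by omega)))
    exact ⟨T'', h1, h2, h3, Or.inl h4⟩
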